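/- For integers $t \ge 1$ and $r \ge 2$, there exists $N$ such that for all $n \ge N$ the following holds. Let $\mathcal{G}$ be a normal subset of $\mathcal{T}_{n,r,t}$ such that $\{G \in \mathcal{G} : H^G \in \mathrm{EX}^2(\mathcal{H}^{\mathcal{G}})\} \subseteq \bigcup_{1 \le i \le r} \mathcal{G}_i$. Then for any $1 \le i \le r$ and any graph $G \in \mathcal{G}_i$, $G \in \mathrm{SPEX}(\mathcal{G}_i)$ if and only if $H^G \in \mathrm{EX}^{\infty}(\mathcal{H}^{\mathcal{G}_i})$. -/

import Mathlib

open Finset Matrix SimpleGraph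
open scoped Classical

/-- `walkCount G ℓ u` is the number of walks of length `ℓ` in `G` starting at `u`
(the quantity `w^ℓ_G(u)` of the paper, with `walkCount G 0 u = 1`). -/
noncomputable def walkCount {V : Type*} [Fintype V] (G : SimpleGraph V) : ℕ → V → ℕ
  | 0, _ => 1
  | ℓ + 1, u => ∑ v ∈ Finset.univ.filter (fun v => G.Adj u v), walkCount G ℓ v

/-- `totalWalks G ℓ = W^ℓ(G) = ∑_u w^ℓ_G(u)`, the number of walks of length `ℓ` in `G`. -/
noncomputable def totalWalks {V : Type*} [Fintype V] (G : SimpleGraph V) (ℓ : ℕ) : ℕ :=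
  ∑ u, walkCount G ℓ u

/-- The spectral radius `ρ(G)` of a graph `G`: the largest eigenvalue of its
adjacency matrix. -/
noncomputable def spectralRad {V : Type*} [Fintype V] (G : SimpleGraph V) : ℝ :=
  sSup {μ : ℝ | ∃ x : V → ℝ, x ≠ 0 ∧ (G.adjMatrix ℝ) *ᵥ x = μ • x}
/-- `EXiter ℓ ℋ = EX^ℓ(ℋ)`: the members of `ℋ` that successively maximize
`W¹, W², …, W^ℓ`. -/
noncomputable def EXiter {V : Type*} [Fintype V] :
    ℕ → Set (SimpleGraph V) → Set (SimpleGraph V)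
  | 0, ℋ => ℋ
  | ℓ + 1, ℋ =>
      {H ∈ EXiter ℓ ℋ | ∀ H' ∈ EXiter ℓ ℋ, totalWalks H' (ℓ + 1) ≤ totalWalks H (ℓ + 1)}

/-- `SPEXset 𝒢`: the members of `𝒢` with maximum spectral radius. -/
noncomputable def SPEXset {V : Type*} [Fintype V] (𝒢 : Set (SimpleGraph V)) :
    Set (SimpleGraph V) :=
  {G ∈ 𝒢 | ∀ G' ∈ 𝒢, spectralRad G' ≤ spectralRad G}

/-- `emb n r G = H^G`: the graph of the edges of `G` beyond the Turán graph `T(n,r)`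
(whose parts are the residue classes `V_i = {v : (v : ℕ) % r = i}`). -/
def emb (n r : ℕ) (G : SimpleGraph (Fin n)) : SimpleGraph (Fin n) :=
  G \ turanGraph n r

/-- `TuranFam n r t = 𝒯_{n,r,t}`: the graphs obtained from the Turán graph `T(n,r)` by
embedding `t` edges into its parts. -/
noncomputable def TuranFam (n r t : ℕ) : Set (SimpleGraph (Fin n)) :=
  {G | turanGraph n r ≤ G ∧
    (∀ u v : Fin n, (emb n r G).Adj u v → (u : ℕ) % r = (v : ℕ) % r) ∧
    (emb n r G).edgeFinset.card = t}

/-- `inPart n r i G`: all embedded edges of `G` lie inside the part `V_i` (so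
`H^G = H^G_i`). -/
def inPart (n r : ℕ) (i : Fin r) (G : SimpleGraph (Fin n)) : Prop :=
  ∀ u v : Fin n, (emb n r G).Adj u v → (u : ℕ) % r = (i : ℕ)

/-- `classSet n r 𝒢 i = 𝒢_i`. -/
def classSet (n r : ℕ) (𝒢 : Set (SimpleGraph (Fin n))) (i : Fin r) :
    Set (SimpleGraph (Fin n)) :=
  {G ∈ 𝒢 | inPart n r i G}

/-- `𝒢` is a normal subset of `𝒯_{n,r,t}`: for any `i ≠ j` and any `G ∈ 𝒢_i` there is
`G' ∈ 𝒢_j` with `H^{G'}` a copy of `H^G`. -/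
def IsNormal (n r : ℕ) (𝒢 : Set (SimpleGraph (Fin n))) : Prop :=
  ∀ i j : Fin r, i ≠ j → ∀ G ∈ classSet n r 𝒢 i, ∃ G' ∈ classSet n r 𝒢 j,
    Nonempty (emb n r G ≃g emb n r G')

/-- `partSize n r i = n_i`: the size of the part `V_i` of the Turán graph `T(n,r)`. -/
def partSize (n r : ℕ) (i : Fin r) : ℕ :=
  (Finset.univ.filter (fun v : Fin n => (v : ℕ) % r = (i : ℕ))).card

/-!
Let `V_i` be the part containing the embedded edges. A graph `G` of the family is the join of
`G[V_i]` and `G[V_iᶜ]`. A nonnegative eigenvector for `ρ = ρ(G)`, restricted to one side of a join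
and divided by its sum over the other side, solves `ρ x = 1 + A x` for the adjacency matrix `A` of
that side, so its sum is a generating function of walks. Hence
`(|V_i| + Z(ρ)) (|V_iᶜ| + Z'(ρ)) = ρ²`, where `Z(x) = ∑ W^ℓ(H^G) / x^ℓ` over `ℓ ≥ 1`, and where `Z'`
is the corresponding series of `G[V_iᶜ]`, the same for all `G`. As `Z` and `Z'` decrease in `x`, a
larger `Z` forces a larger `ρ`. For large `x` the series `Z` compare like their coefficients
`W¹, W², …` in the lexicographic order, uniformly because only finitely many coefficient sequences
come from graphs with `t` edges, and `ρ(G)` is large because `ρ² ≥ |V_i| |V_iᶜ|`.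
-/

lemma adjMatrix_real_nonneg {V : Type*} (G : SimpleGraph V) (u v : V) :
    0 ≤ G.adjMatrix ℝ u v := by
  rw [adjMatrix_apply]
  split_ifs <;> simp

section Perron

variable {V : Type*} [Fintype V]

lemma isGreatest_sSup_spectrum [Nonempty V] {A : Matrix V V ℝ} (hA : A.IsHermitian) :
    IsGreatest (spectrum ℝ A) (sSup (spectrum ℝ A)) := by
  have hfin : (spectrum ℝ A).Finite := by
    rw [hA.spectrum_real_eq_range_eigenvalues]
    exact Set.finite_range _
  have hne : (spectrum ℝ A).Nonempty := by
    rw [hA.spectrum_real_eq_range_eigenvalues]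
    exact Set.range_nonempty _
  exact ⟨hne.csSup_mem hfin, fun _ hμ ↦ le_csSup hfin.bddAbove hμ⟩

lemma posSemidef_sSup_spectrum_smul_one_sub [Nonempty V] {A : Matrix V V ℝ}
    (hA : A.IsHermitian) : (sSup (spectrum ℝ A) • (1 : Matrix V V ℝ) - A).PosSemidef := by
  rw [posSemidef_iff_isHermitian_and_spectrum_nonneg]
  refine ⟨(isHermitian_one.smul (IsSelfAdjoint.all _)).sub hA, ?_⟩
  rw [← Algebra.algebraMap_eq_smul_one, ← spectrum.singleton_sub_eq]
  rintro _ ⟨_, rfl, μ, hμ, rfl⟩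
  exact sub_nonneg.mpr ((isGreatest_sSup_spectrum hA).2 hμ)

lemma exists_mulVec_eq_smul_iff_mem_spectrum {A : Matrix V V ℝ} {μ : ℝ} :
    (∃ x : V → ℝ, x ≠ 0 ∧ A *ᵥ x = μ • x) ↔ μ ∈ spectrum ℝ A := by
  rw [← spectrum_toLin', ← Module.End.hasEigenvalue_iff_mem_spectrum]
  constructor
  · rintro ⟨x, hx, hAx⟩
    exact Module.End.hasEigenvalue_of_hasEigenvector
      (Module.End.hasEigenvector_iff.mpr ⟨Module.End.mem_eigenspace_iff.mpr hAx, hx⟩)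
  · intro hμ
    obtain ⟨x, hx⟩ := hμ.exists_hasEigenvector
    exact ⟨x, hx.2, hx.apply_eq_smul⟩

lemma dotProduct_mulVec_le_abs {A : Matrix V V ℝ} (hA : ∀ i j, 0 ≤ A i j) (x : V → ℝ) :
    x ⬝ᵥ A *ᵥ x ≤ |x| ⬝ᵥ A *ᵥ |x| := by
  simp only [dotProduct, mulVec, Finset.mul_sum, Pi.abs_apply]
  refine Finset.sum_le_sum fun i _ ↦ Finset.sum_le_sum fun j _ ↦ ?_
  calc x i * (A i j * x j) ≤ |x i * (A i j * x j)| := le_abs_self _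
    _ = |x i| * (A i j * |x j|) := by rw [abs_mul, abs_mul, abs_of_nonneg (hA i j)]

theorem exists_nonneg_mulVec_eq_sSup_spectrum_smul [Nonempty V] {A : Matrix V V ℝ}
    (hA : A.IsHermitian) (hA₀ : ∀ i j, 0 ≤ A i j) :
    ∃ x : V → ℝ, 0 ≤ x ∧ x ≠ 0 ∧ A *ᵥ x = sSup (spectrum ℝ A) • x := by
  set ρ := sSup (spectrum ℝ A)
  have hpsd := posSemidef_sSup_spectrum_smul_one_sub hA
  obtain ⟨x, hx, hAx⟩ := exists_mulVec_eq_smul_iff_mem_spectrum.mpr (isGreatest_sSup_spectrum hA).1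
  have hquad (y : V → ℝ) :
      y ⬝ᵥ (ρ • (1 : Matrix V V ℝ) - A) *ᵥ y = ρ * (y ⬝ᵥ y) - y ⬝ᵥ A *ᵥ y := by
    simp [sub_mulVec, smul_mulVec]
  have hsq : |x| ⬝ᵥ |x| = x ⬝ᵥ x := by simp [dotProduct]
  have hxx : x ⬝ᵥ A *ᵥ x = ρ * (x ⬝ᵥ x) := by rw [hAx, dotProduct_smul, smul_eq_mul]
  have hker : (ρ • (1 : Matrix V V ℝ) - A) *ᵥ |x| = 0 := by
    rw [← hpsd.dotProduct_mulVec_zero_iff]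
    refine le_antisymm ?_ (hpsd.dotProduct_mulVec_nonneg _)
    rw [star_trivial, hquad, hsq, ← hxx, sub_nonpos]
    exact dotProduct_mulVec_le_abs hA₀ x
  refine ⟨|x|, abs_nonneg x, by simpa using hx, ?_⟩
  rw [sub_mulVec, smul_mulVec, one_mulVec, sub_eq_zero] at hker
  exact hker.symm

lemma spectralRad_eq_sSup_spectrum (G : SimpleGraph V) :
    spectralRad G = sSup (spectrum ℝ (G.adjMatrix ℝ)) :=
  congrArg sSup (Set.ext fun _ ↦ exists_mulVec_eq_smul_iff_mem_spectrum)

theorem exists_nonneg_adjMatrix_mulVec_eq_spectralRad_smul [Nonempty V] (G : SimpleGraph V) :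
    ∃ x : V → ℝ, 0 ≤ x ∧ x ≠ 0 ∧ G.adjMatrix ℝ *ᵥ x = spectralRad G • x := by
  rw [spectralRad_eq_sSup_spectrum]
  exact exists_nonneg_mulVec_eq_sSup_spectrum_smul
    (isHermitian_iff_isSymm.mpr G.isSymm_adjMatrix) (adjMatrix_real_nonneg G)

end Perron

section Resolvent

open Filter Topology

variable {V : Type*} [Fintype V] {A : Matrix V V ℝ} {ρ : ℝ} {x : V → ℝ}

lemma pow_mulVec_mono (hA : ∀ i j, 0 ≤ A i j) (ℓ : ℕ) {y z : V → ℝ} (hyz : y ≤ z) :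
    A ^ ℓ *ᵥ y ≤ A ^ ℓ *ᵥ z := by
  induction ℓ with
  | zero => simpa using hyz
  | succ ℓ ih =>
    simp only [pow_succ', ← mulVec_mulVec]
    exact fun i ↦ Finset.sum_le_sum fun j _ ↦ mul_le_mul_of_nonneg_left (ih j) (hA i j)

lemma sum_range_pow_mulVec_one_div_pow (hρ : ρ ≠ 0) (hx : ρ • x = 1 + A *ᵥ x) (k : ℕ) (i : V) :
    ∑ ℓ ∈ range k, (A ^ ℓ *ᵥ 1) i / ρ ^ (ℓ + 1) = x i - (A ^ k *ᵥ x) i / ρ ^ k := by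
  induction k with
  | zero => simp
  | succ k ih =>
    have hstep : ρ * (A ^ k *ᵥ x) i = (A ^ k *ᵥ 1) i + (A ^ (k + 1) *ᵥ x) i := by
      have := congrFun (congrArg (A ^ k *ᵥ ·) hx) i
      simpa [mulVec_smul, mulVec_add, pow_succ, mulVec_mulVec] using this
    rw [sum_range_succ, ih, eq_sub_of_add_eq hstep.symm]
    field_simp
    ring

theorem hasSum_pow_mulVec_one_div_pow (hA : ∀ i j, 0 ≤ A i j) (hρ : 0 < ρ) (hx₀ : 0 ≤ x)
    (hx : ρ • x = 1 + A *ᵥ x) (i : V) :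
    HasSum (fun ℓ ↦ (A ^ ℓ *ᵥ 1) i / ρ ^ (ℓ + 1)) (x i) := by
  have hone (ℓ : ℕ) : 0 ≤ (A ^ ℓ *ᵥ 1) i := by
    simpa using pow_mulVec_mono hA ℓ (zero_le_one' (V → ℝ)) i
  have hpow (ℓ : ℕ) : 0 ≤ (A ^ ℓ *ᵥ x) i := by simpa using pow_mulVec_mono hA ℓ hx₀ i
  have hterm (ℓ : ℕ) : 0 ≤ (A ^ ℓ *ᵥ 1) i / ρ ^ (ℓ + 1) := div_nonneg (hone ℓ) (pow_pos hρ _).le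
  have hsum : Summable fun ℓ ↦ (A ^ ℓ *ᵥ 1) i / ρ ^ (ℓ + 1) := by
    refine summable_of_sum_range_le (c := x i) hterm fun k ↦ ?_
    rw [sum_range_pow_mulVec_one_div_pow hρ.ne' hx]
    exact sub_le_self _ (div_nonneg (hpow k) (pow_pos hρ k).le)
  -- The remainder `A ^ k x / ρ ^ k` is at most a constant times a term of a convergent series.
  obtain ⟨C, hC⟩ : ∃ C : ℝ, x ≤ C • 1 :=
    ⟨∑ j, x j, fun j ↦ by simpa using single_le_sum (fun j _ ↦ hx₀ j) (mem_univ j)⟩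
  have hrem : Tendsto (fun k ↦ (A ^ k *ᵥ x) i / ρ ^ k) atTop (𝓝 0) := by
    have hbound : Tendsto (fun k ↦ C * ρ * ((A ^ k *ᵥ 1) i / ρ ^ (k + 1))) atTop
        (𝓝 0) := by
      simpa using hsum.tendsto_atTop_zero.const_mul (C * ρ)
    refine squeeze_zero (fun k ↦ div_nonneg (hpow k) (pow_pos hρ k).le) (fun k ↦ ?_) hbound
    calc (A ^ k *ᵥ x) i / ρ ^ k ≤ C * (A ^ k *ᵥ 1) i / ρ ^ k := by
          gcongr
          simpa [mulVec_smul] using pow_mulVec_mono hA k hC i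
      _ = C * ρ * ((A ^ k *ᵥ 1) i / ρ ^ (k + 1)) := by rw [pow_succ]; field_simp
  rw [hasSum_iff_tendsto_nat_of_nonneg hterm]
  simpa only [sum_range_pow_mulVec_one_div_pow hρ.ne' hx, sub_zero] using hrem.const_sub (x i)

end Resolvent

section WalkSeries

variable {V W : Type*} [Fintype V] [Fintype W]

/-- The sequence `W¹(G), W²(G), …` of walk counts of `G`, ordered lexicographically: maximizing it
is maximizing `W¹`, then `W²` among the maximizers, and so on. -/
noncomputable def walkSeq (G : SimpleGraph V) : Lex (ℕ → ℕ) :=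
  toLex fun ℓ ↦ totalWalks G (ℓ + 1)

/-- The generating function `∑ W^ℓ(G) / x^ℓ` of the walks of positive length in `G`. The walks of
length `0` are left out so that isolated vertices do not contribute. -/
noncomputable def walkSeries (G : SimpleGraph V) (x : ℝ) : ℝ :=
  ∑' ℓ, (totalWalks G (ℓ + 1) : ℝ) / x ^ (ℓ + 1)

lemma walkSeries_congr {G : SimpleGraph V} {H : SimpleGraph W} (h : walkSeq G = walkSeq H)
    (x : ℝ) : walkSeries G x = walkSeries H x := by
  have (ℓ : ℕ) : totalWalks G (ℓ + 1) = totalWalks H (ℓ + 1) := congrFun (toLex.injective h) ℓ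
  simp only [walkSeries, this]

lemma walkSeries_nonneg (G : SimpleGraph V) {x : ℝ} (hx : 0 ≤ x) : 0 ≤ walkSeries G x :=
  tsum_nonneg fun _ ↦ by positivity

lemma walkSeries_le_of_le {G : SimpleGraph V} {x y : ℝ} (hx : 0 < x) (hxy : x ≤ y)
    (hsum : Summable fun ℓ ↦ (totalWalks G (ℓ + 1) : ℝ) / x ^ (ℓ + 1)) :
    walkSeries G y ≤ walkSeries G x := by
  have hterm (ℓ : ℕ) :
      (totalWalks G (ℓ + 1) : ℝ) / y ^ (ℓ + 1) ≤ totalWalks G (ℓ + 1) / x ^ (ℓ + 1) := by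
    gcongr
  have hy : 0 < y := hx.trans_le hxy
  exact (hsum.of_nonneg_of_le (fun _ ↦ by positivity) hterm).tsum_le_tsum hterm hsum

lemma walkCount_eq_pow_adjMatrix_mulVec_one (G : SimpleGraph V) (ℓ : ℕ) (u : V) :
    (walkCount G ℓ u : ℝ) = (G.adjMatrix ℝ ^ ℓ *ᵥ 1) u := by
  induction ℓ generalizing u with
  | zero => simp [walkCount]
  | succ ℓ ih =>
    rw [pow_succ', ← mulVec_mulVec, adjMatrix_mulVec_apply, neighborFinset_eq_filter, walkCount]
    push_cast
    exact Finset.sum_congr rfl fun v _ ↦ ih v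

lemma hasSum_totalWalks_div_pow (G : SimpleGraph V) {ρ : ℝ} {x : V → ℝ} (hρ : 0 < ρ) (hx₀ : 0 ≤ x)
    (hx : ρ • x = 1 + G.adjMatrix ℝ *ᵥ x) :
    HasSum (fun ℓ ↦ (totalWalks G (ℓ + 1) : ℝ) / ρ ^ (ℓ + 1))
      (ρ * ∑ u, x u - Fintype.card V) := by
  have hall : HasSum (fun ℓ ↦ (totalWalks G ℓ : ℝ) / ρ ^ (ℓ + 1)) (∑ u, x u) := by
    simpa only [totalWalks, Nat.cast_sum, walkCount_eq_pow_adjMatrix_mulVec_one, Finset.sum_div]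
      using hasSum_sum fun u _ ↦ hasSum_pow_mulVec_one_div_pow
        (adjMatrix_real_nonneg G) hρ hx₀ hx u
  have hterm (ℓ : ℕ) : ρ * ((totalWalks G (ℓ + 1) : ℝ) / ρ ^ (ℓ + 1 + 1)) =
      totalWalks G (ℓ + 1) / ρ ^ (ℓ + 1) := by
    rw [pow_succ _ (ℓ + 1)]
    field_simp
  have hvalue : ρ * (∑ u, x u - ∑ ℓ ∈ range 1, (totalWalks G ℓ : ℝ) / ρ ^ (ℓ + 1)) =
      ρ * ∑ u, x u - Fintype.card V := by
    simp [totalWalks, walkCount, mul_sub, mul_div_cancel₀ _ hρ.ne']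
  simpa only [hterm, hvalue] using ((hasSum_nat_add_iff' 1).mpr hall).mul_left ρ

end WalkSeries

section Join

variable {V : Type*} [Fintype V] {G : SimpleGraph V} {s t : Set V}

lemma sum_eq_sum_add_sum_of_isCompl {M : Type*} [AddCommMonoid M] (hst : IsCompl s t) (f : V → M) :
    ∑ v, f v = ∑ v : s, f v + ∑ v : t, f v := by
  obtain rfl := hst.compl_eq
  convert (Fintype.sum_subtype_add_sum_subtype (· ∈ s) f).symm

lemma adjMatrix_mulVec_apply_of_isCompleteBetween (hst : IsCompl s t)
    (hG : G.IsCompleteBetween s t) (x : V → ℝ) (u : s) :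
    (G.adjMatrix ℝ *ᵥ x) u =
      ∑ v : t, x v + ((G.induce s).adjMatrix ℝ *ᵥ fun v : s ↦ x v) u := by
  simp only [mulVec, dotProduct, adjMatrix_apply, comap_adj, ite_mul, one_mul, zero_mul]
  rw [sum_eq_sum_add_sum_of_isCompl hst, add_comm]
  congr 1
  exact Finset.sum_congr rfl fun v _ ↦ if_pos (hG u.2 v.2)

lemma sum_le_mul_of_isCompleteBetween (hst : IsCompl s t) (hG : G.IsCompleteBetween s t) {ρ : ℝ}
    {x : V → ℝ} (hx₀ : 0 ≤ x) (hx : G.adjMatrix ℝ *ᵥ x = ρ • x) (u : s) :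
    ∑ v : t, x v ≤ ρ * x u := by
  have hu := adjMatrix_mulVec_apply_of_isCompleteBetween hst hG x u
  rw [hx, Pi.smul_apply, smul_eq_mul, adjMatrix_mulVec_apply] at hu
  exact hu ▸ le_add_of_nonneg_right (Finset.sum_nonneg fun v _ ↦ hx₀ v)

lemma pos_and_sum_pos_of_isCompleteBetween (hst : IsCompl s t) (hs : s.Nonempty)
    (hG : G.IsCompleteBetween s t) {ρ : ℝ} {x : V → ℝ} (hx₀ : 0 ≤ x)
    (hx : G.adjMatrix ℝ *ᵥ x = ρ • x) (hpos : 0 < ∑ v : t, x v) : 0 < ρ ∧ 0 < ∑ u : s, x u := by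
  obtain ⟨u, hu⟩ := hs
  have hρu : 0 < ρ * x u :=
    hpos.trans_le (sum_le_mul_of_isCompleteBetween hst hG hx₀ hx ⟨u, hu⟩)
  exact ⟨pos_of_mul_pos_left hρu (hx₀ u), Finset.sum_pos' (fun v _ ↦ hx₀ v)
    ⟨⟨u, hu⟩, mem_univ _, (hx₀ u).lt_of_ne fun h ↦ by simp [← h] at hρu⟩⟩

lemma hasSum_totalWalks_induce_div_pow (hst : IsCompl s t) (hG : G.IsCompleteBetween s t) {ρ : ℝ}
    {x : V → ℝ} (hρ : 0 < ρ) (hx₀ : 0 ≤ x) (hx : G.adjMatrix ℝ *ᵥ x = ρ • x)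
    (hpos : 0 < ∑ v : t, x v) :
    HasSum (fun ℓ ↦ (totalWalks (G.induce s) (ℓ + 1) : ℝ) / ρ ^ (ℓ + 1))
      (ρ * ((∑ u : s, x u) / ∑ v : t, x v) - Fintype.card s) := by
  set S := ∑ v : t, x v with hS
  rw [Finset.sum_div]
  refine hasSum_totalWalks_div_pow _ hρ (x := fun u : s ↦ x u / S)
    (fun u ↦ div_nonneg (hx₀ u) hpos.le) (funext fun u ↦ ?_)
  have hu := adjMatrix_mulVec_apply_of_isCompleteBetween hst hG x u
  rw [hx, ← hS, adjMatrix_mulVec_apply] at hu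
  simp only [Pi.smul_apply, Pi.add_apply, Pi.one_apply, smul_eq_mul, adjMatrix_mulVec_apply,
    ← Finset.sum_div] at hu ⊢
  rw [mul_div_assoc', hu, add_div, div_self hpos.ne']
  congr!

lemma exists_nonneg_eigenvector_of_isCompleteBetween (hst : IsCompl s t) (hs : s.Nonempty)
    (ht : t.Nonempty) (hG : G.IsCompleteBetween s t) :
    ∃ x : V → ℝ, 0 ≤ x ∧ G.adjMatrix ℝ *ᵥ x = spectralRad G • x ∧
      0 < spectralRad G ∧ 0 < ∑ u : s, x u ∧ 0 < ∑ v : t, x v := by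
  have : Nonempty V := hs.to_subtype.map (↑)
  obtain ⟨x, hx₀, hxne, hx⟩ := exists_nonneg_adjMatrix_mulVec_eq_spectralRad_smul G
  refine ⟨x, hx₀, hx, ?_⟩
  have hsum : 0 < ∑ v, x v := Fintype.sum_pos (hx₀.lt_of_ne' hxne)
  rw [sum_eq_sum_add_sum_of_isCompl hst] at hsum
  rcases lt_or_ge 0 (∑ v : t, x v) with htpos | htneg
  · exact (pos_and_sum_pos_of_isCompleteBetween hst hs hG hx₀ hx htpos).imp_right (⟨·, htpos⟩)
  · have hspos : 0 < ∑ u : s, x u := by linarith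
    exact (pos_and_sum_pos_of_isCompleteBetween hst.symm ht hG.symm hx₀ hx hspos).imp_right
      (⟨hspos, ·⟩)

lemma spectralRad_pos_of_isCompleteBetween (hst : IsCompl s t) (hs : s.Nonempty)
    (ht : t.Nonempty) (hG : G.IsCompleteBetween s t) : 0 < spectralRad G := by
  obtain ⟨x, -, -, hρ, -⟩ := exists_nonneg_eigenvector_of_isCompleteBetween hst hs ht hG
  exact hρ

lemma summable_totalWalks_induce_div_spectralRad_pow (hst : IsCompl s t) (hs : s.Nonempty)
    (ht : t.Nonempty) (hG : G.IsCompleteBetween s t) :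
    Summable fun ℓ ↦ (totalWalks (G.induce s) (ℓ + 1) : ℝ) / spectralRad G ^ (ℓ + 1) := by
  obtain ⟨x, hx₀, hx, hρ, -, htpos⟩ :=
    exists_nonneg_eigenvector_of_isCompleteBetween hst hs ht hG
  exact (hasSum_totalWalks_induce_div_pow hst hG hρ hx₀ hx htpos).summable

/-- The left-hand side of the equation `(|s| + Z_s(x)) (|t| + Z_t(x)) = x ^ 2` satisfied by the
spectral radius of a join, where `Z_s`, `Z_t` are the walk series of the two sides. The definition
makes sense for any `G`, but describes `spectralRad G` only if `s` and `t` are completely joined. -/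
noncomputable def joinWalkProd (G : SimpleGraph V) (s t : Set V) (x : ℝ) : ℝ :=
  (Fintype.card s + walkSeries (G.induce s) x) * (Fintype.card t + walkSeries (G.induce t) x)

theorem joinWalkProd_spectralRad (hst : IsCompl s t) (hs : s.Nonempty) (ht : t.Nonempty)
    (hG : G.IsCompleteBetween s t) : joinWalkProd G s t (spectralRad G) = spectralRad G ^ 2 := by
  obtain ⟨x, hx₀, hx, hρ, hspos, htpos⟩ :=
    exists_nonneg_eigenvector_of_isCompleteBetween hst hs ht hG
  rw [joinWalkProd, walkSeries, walkSeries,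
    (hasSum_totalWalks_induce_div_pow hst hG hρ hx₀ hx htpos).tsum_eq,
    (hasSum_totalWalks_induce_div_pow hst.symm hG.symm hρ hx₀ hx hspos).tsum_eq]
  field_simp
  ring

theorem ncard_mul_ncard_le_spectralRad_sq (hst : IsCompl s t) (hs : s.Nonempty) (ht : t.Nonempty)
    (hG : G.IsCompleteBetween s t) :
    (s.ncard * t.ncard : ℝ) ≤ spectralRad G ^ 2 := by
  have hρ := (spectralRad_pos_of_isCompleteBetween hst hs ht hG).le
  rw [← joinWalkProd_spectralRad hst hs ht hG, joinWalkProd, ← Nat.card_coe_set_eq,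
    ← Nat.card_coe_set_eq, Nat.card_eq_fintype_card, Nat.card_eq_fintype_card]
  have hsSeries := walkSeries_nonneg (G.induce s) hρ
  have htSeries := walkSeries_nonneg (G.induce t) hρ
  gcongr <;> linarith

lemma joinWalkProd_le_spectralRad_sq (hst : IsCompl s t) (hs : s.Nonempty) (ht : t.Nonempty)
    (hG : G.IsCompleteBetween s t) {x : ℝ} (hx : spectralRad G ≤ x) :
    joinWalkProd G s t x ≤ spectralRad G ^ 2 := by
  have hρ := spectralRad_pos_of_isCompleteBetween hst hs ht hG
  have hsSeries := walkSeries_le_of_le hρ hx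
    (summable_totalWalks_induce_div_spectralRad_pow hst hs ht hG)
  have htSeries := walkSeries_le_of_le hρ hx
    (summable_totalWalks_induce_div_spectralRad_pow hst.symm ht hs hG.symm)
  have hx₀ : 0 ≤ walkSeries (G.induce t) x := walkSeries_nonneg _ (hρ.le.trans hx)
  have hρ₀ : 0 ≤ walkSeries (G.induce s) (spectralRad G) := walkSeries_nonneg _ hρ.le
  rw [← joinWalkProd_spectralRad hst hs ht hG, joinWalkProd, joinWalkProd]
  gcongr

theorem spectralRad_le_of_walkSeries_le {G' : SimpleGraph V} (hst : IsCompl s t) (hs : s.Nonempty)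
    (ht : t.Nonempty) (hG : G.IsCompleteBetween s t) (hG' : G'.IsCompleteBetween s t)
    (heq : G.induce t = G'.induce t)
    (hle : walkSeries (G.induce s) (spectralRad G) ≤ walkSeries (G'.induce s) (spectralRad G)) :
    spectralRad G ≤ spectralRad G' := by
  have hρ := spectralRad_pos_of_isCompleteBetween hst hs ht hG
  have hρ' := spectralRad_pos_of_isCompleteBetween hst hs ht hG'
  by_contra! hlt
  have := walkSeries_nonneg (G'.induce t) hρ.le
  suffices spectralRad G ^ 2 ≤ spectralRad G' ^ 2 from
    hlt.not_ge ((sq_le_sq₀ hρ.le hρ'.le).mp this)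
  calc spectralRad G ^ 2 = joinWalkProd G s t (spectralRad G) :=
        (joinWalkProd_spectralRad hst hs ht hG).symm
    _ ≤ joinWalkProd G' s t (spectralRad G) := by
        rw [joinWalkProd, joinWalkProd, heq]
        gcongr
    _ ≤ spectralRad G' ^ 2 := joinWalkProd_le_spectralRad_sq hst hs ht hG' hlt.le

theorem spectralRad_lt_of_walkSeries_lt {G' : SimpleGraph V} (hst : IsCompl s t) (hs : s.Nonempty)
    (ht : t.Nonempty) (hG : G.IsCompleteBetween s t) (hG' : G'.IsCompleteBetween s t)
    (heq : G.induce t = G'.induce t)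
    (hlt : walkSeries (G.induce s) (spectralRad G) < walkSeries (G'.induce s) (spectralRad G)) :
    spectralRad G < spectralRad G' := by
  refine (spectralRad_le_of_walkSeries_le hst hs ht hG hG' heq hlt.le).lt_of_ne fun hρ ↦ ?_
  have htpos : (0 : ℝ) < Fintype.card t + walkSeries (G'.induce t) (spectralRad G) := by
    have := walkSeries_nonneg (G'.induce t) (spectralRad_pos_of_isCompleteBetween hst hs ht hG).le
    have : Nonempty t := ht.to_subtype
    positivity
  have hprod := joinWalkProd_spectralRad hst hs ht hG
  rw [hρ, ← joinWalkProd_spectralRad hst hs ht hG', ← hρ, joinWalkProd, joinWalkProd, heq] at hprod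
  linarith [mul_right_cancel₀ htpos.ne' hprod]

end Join

section SeriesAtInfinity

open Filter Topology

variable {a b : ℕ → ℝ} {X x : ℝ}

lemma abs_div_pow_le_abs_div_pow (hX : 0 < X) (hx : X ≤ x) (m : ℕ) :
    |a m / x ^ m| ≤ |a m / X ^ m| := by
  rw [abs_div, abs_div, abs_of_pos (pow_pos hX m), abs_of_pos (pow_pos (hX.trans_le hx) m)]
  gcongr

lemma summable_div_pow_of_le (hX : 0 < X) (hx : X ≤ x) (ha : Summable fun m ↦ a m / X ^ m) :
    Summable fun m ↦ a m / x ^ m :=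
  ha.abs.of_norm_bounded (abs_div_pow_le_abs_div_pow hX hx)

lemma tendsto_tsum_div_pow_atTop (hX : 0 < X) (ha : Summable fun m ↦ a m / X ^ m) :
    Tendsto (fun x ↦ ∑' m, a m / x ^ m) atTop (𝓝 (a 0)) := by
  rw [← tsum_ite_eq (0 : ℕ) (fun _ ↦ a 0)]
  refine tendsto_tsum_of_dominated_convergence ha.abs (fun m ↦ ?_)
    ((eventually_ge_atTop X).mono fun x ↦ abs_div_pow_le_abs_div_pow hX)
  rcases eq_or_ne m 0 with rfl | hm
  · simp
  · simpa only [if_neg hm] using (tendsto_pow_atTop hm).const_div_atTop (a m)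

theorem eventually_tsum_div_pow_lt_tsum_div_pow (hX : 0 < X) (ha : Summable fun m ↦ a m / X ^ m)
    (hb : Summable fun m ↦ b m / X ^ m) {k : ℕ} (heq : ∀ j < k, a j = b j) (hlt : a k < b k) :
    ∀ᶠ x in atTop, ∑' m, a m / x ^ m < ∑' m, b m / x ^ m := by
  have hsub (x : ℝ) (hx : X ≤ x) : ∑' m, b m / x ^ m - ∑' m, a m / x ^ m =
      (∑' m, (b (m + k) - a (m + k)) / x ^ m) / x ^ k := by
    have ha' := summable_div_pow_of_le hX hx ha
    have hb' := summable_div_pow_of_le hX hx hb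
    have hhead : ∑ m ∈ range k, (b m / x ^ m - a m / x ^ m) = 0 :=
      Finset.sum_eq_zero fun j hj ↦ by rw [heq j (mem_range.mp hj), sub_self]
    rw [← hb'.tsum_sub ha', ← (hb'.sub ha').sum_add_tsum_nat_add k, hhead, zero_add,
      ← tsum_div_const]
    simp only [pow_add, div_div, sub_div]
  have hsummable : Summable fun m ↦ (b (m + k) - a (m + k)) / X ^ m := by
    have := ((summable_nat_add_iff k).mpr (hb.sub ha)).mul_right (X ^ k)
    refine this.congr fun m ↦ ?_
    rw [pow_add]
    field_simp
  have hpos : 0 < b (0 + k) - a (0 + k) := by simpa using hlt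
  filter_upwards [(tendsto_tsum_div_pow_atTop hX hsummable).eventually_const_lt hpos,
    eventually_ge_atTop X] with x hx hXx
  have hxk : 0 < x ^ k := pow_pos (hX.trans_le hXx) k
  rw [← sub_pos, hsub x hXx]
  exact div_pos hx hxk

end SeriesAtInfinity

section WalkOrder

open Filter

variable {V W : Type*} [Fintype V] [Fintype W]

lemma walkCount_le (G : SimpleGraph V) (ℓ : ℕ) (u : V) : walkCount G ℓ u ≤ Fintype.card V ^ ℓ := by
  induction ℓ generalizing u with
  | zero => simp [walkCount]
  | succ ℓ ih =>
    calc walkCount G (ℓ + 1) u ≤ ∑ v, walkCount G ℓ v := sum_le_sum_of_subset (filter_subset _ _)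
      _ ≤ ∑ _v : V, Fintype.card V ^ ℓ := Finset.sum_le_sum fun v _ ↦ ih v
      _ = Fintype.card V ^ (ℓ + 1) := by
        rw [sum_const, card_univ, smul_eq_mul, pow_succ']

lemma totalWalks_le (G : SimpleGraph V) (ℓ : ℕ) : totalWalks G ℓ ≤ Fintype.card V ^ (ℓ + 1) := by
  rw [pow_succ', ← smul_eq_mul, ← card_univ, totalWalks]
  exact sum_le_card_nsmul _ _ _ fun u _ ↦ walkCount_le G ℓ u

lemma summable_totalWalks_succ_div_pow (G : SimpleGraph V) {x : ℝ} (hx : Fintype.card V < x) :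
    Summable fun ℓ ↦ (totalWalks G (ℓ + 1) : ℝ) / x ^ ℓ := by
  have hx₀ : 0 < x := (Nat.cast_nonneg _).trans_lt hx
  have hgeom := (summable_geometric_of_lt_one (by positivity)
    ((div_lt_one hx₀).mpr hx)).mul_left ((Fintype.card V : ℝ) ^ 2)
  refine hgeom.of_nonneg_of_le (fun ℓ ↦ by positivity) fun ℓ ↦ ?_
  rw [div_pow, ← mul_div_assoc, ← pow_add, add_comm 2 ℓ]
  gcongr
  exact_mod_cast totalWalks_le G (ℓ + 1)

lemma walkSeries_eq_tsum_div (G : SimpleGraph V) (x : ℝ) :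
    walkSeries G x = (∑' ℓ, (totalWalks G (ℓ + 1) : ℝ) / x ^ ℓ) / x := by
  simp only [walkSeries, pow_succ, ← div_div, tsum_div_const]

theorem eventually_walkSeries_lt {G : SimpleGraph V} {H : SimpleGraph W}
    (h : walkSeq G < walkSeq H) : ∀ᶠ x in atTop, walkSeries G x < walkSeries H x := by
  obtain ⟨k, heq, hlt⟩ := h
  set X : ℝ := Fintype.card V + Fintype.card W + 1
  have hX : 0 < X := by positivity
  have hG := summable_totalWalks_succ_div_pow G (x := X) (by grind)
  have hH := summable_totalWalks_succ_div_pow H (x := X) (by grind)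
  filter_upwards [eventually_tsum_div_pow_lt_tsum_div_pow hX hG hH
    (fun j hj ↦ congrArg Nat.cast (heq j hj)) (Nat.cast_lt.mpr hlt), eventually_gt_atTop 0]
    with x hx hx₀
  rw [walkSeries_eq_tsum_div, walkSeries_eq_tsum_div]
  gcongr

lemma walkCount_map (G : SimpleGraph V) (f : V ↪ W) (ℓ : ℕ) (u : V) :
    walkCount (G.map f) ℓ (f u) = walkCount G ℓ u := by
  induction ℓ generalizing u with
  | zero => rfl
  | succ ℓ ih =>
    refine (Finset.sum_nbij f (fun v hv ↦ ?_) f.injective.injOn (fun w hw ↦ ?_)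
      fun v _ ↦ (ih v).symm).symm
    · simpa using hv
    · obtain ⟨v, hv, rfl⟩ : w ∈ f '' G.neighborSet u := by simpa [← neighborSet_map] using hw
      exact ⟨v, by simpa using hv, rfl⟩

lemma walkCount_succ_eq_zero_of_notMem_support {G : SimpleGraph V} {u : V} (hu : u ∉ G.support)
    (ℓ : ℕ) : walkCount G (ℓ + 1) u = 0 :=
  Finset.sum_eq_zero fun v hv ↦ absurd ⟨v, (mem_filter_univ v).mp hv⟩ hu

lemma walkSeq_map (G : SimpleGraph V) (f : V ↪ W) : walkSeq (G.map f) = walkSeq G := by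
  refine congrArg toLex (funext fun ℓ ↦ ?_)
  have hsupport (w : W) (hw : w ∉ univ.map f) : walkCount (G.map f) (ℓ + 1) w = 0 := by
    refine walkCount_succ_eq_zero_of_notMem_support (fun hsupp ↦ hw ?_) ℓ
    obtain ⟨v, -, rfl⟩ := support_map f G ▸ hsupp
    exact mem_map_of_mem f (mem_univ v)
  simp only [totalWalks, ← walkCount_map G f, ← sum_map univ f]
  exact (sum_subset (subset_univ _) fun w _ hw ↦ hsupport w hw).symm

lemma walkSeq_induce_of_support_subset {G : SimpleGraph V} {s : Set V} [Fintype s]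
    (hs : G.support ⊆ s) : walkSeq (G.induce s) = walkSeq G :=
  (walkSeq_map _ _).symm.trans (congrArg walkSeq ((G.spanningCoe_induce_eq_self s).mpr hs))

lemma card_support_le_two_mul_card_edgeFinset (G : SimpleGraph V) :
    Fintype.card G.support ≤ 2 * #G.edgeFinset := by
  have hsub : G.support.toFinset ⊆ G.edgeFinset.biUnion Sym2.toFinset := by
    intro u hu
    obtain ⟨v, huv⟩ := Set.mem_toFinset.mp hu
    exact mem_biUnion.mpr ⟨s(u, v), mem_edgeFinset.mpr huv, by simp⟩
  rw [← Set.toFinset_card, mul_comm]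
  refine (card_le_card hsub).trans (card_biUnion_le_card_mul _ _ _ fun e _ ↦ ?_)
  rw [Sym2.card_toFinset]
  split_ifs <;> omega

lemma exists_walkSeq_eq_of_card_edgeFinset_eq {t : ℕ} (G : SimpleGraph V)
    (hG : #G.edgeFinset = t) : ∃ H : SimpleGraph (Fin (2 * t)), walkSeq H = walkSeq G := by
  obtain ⟨f⟩ : Nonempty (G.support ↪ Fin (2 * t)) := Function.Embedding.nonempty_of_card_le <| by
    rw [Fintype.card_fin, ← hG]
    exact card_support_le_two_mul_card_edgeFinset G
  exact ⟨(G.induce G.support).map f,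
    (walkSeq_map _ f).trans (walkSeq_induce_of_support_subset Set.Subset.rfl)⟩

-- Up to isolated vertices there are finitely many graphs with `t` edges, so the threshold beyond
-- which their walk series compare lexicographically can be chosen independently of the vertex sets.
theorem eventually_forall_walkSeries_lt (t : ℕ) :
    ∀ᶠ x in atTop, ∀ ⦃V W : Type*⦄ [Fintype V] [Fintype W] (G : SimpleGraph V) (H : SimpleGraph W),
      #G.edgeFinset = t → #H.edgeFinset = t → walkSeq G < walkSeq H →
        walkSeries G x < walkSeries H x := by
  have hfin : ∀ᶠ x in atTop, ∀ G₀ H₀ : SimpleGraph (Fin (2 * t)),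
      walkSeq G₀ < walkSeq H₀ → walkSeries G₀ x < walkSeries H₀ x := by
    simp only [eventually_all]
    exact fun _ _ ↦ eventually_walkSeries_lt
  refine hfin.mono fun x hx V W _ _ G H hG hH hlt ↦ ?_
  obtain ⟨G₀, hG₀⟩ := exists_walkSeq_eq_of_card_edgeFinset_eq G hG
  obtain ⟨H₀, hH₀⟩ := exists_walkSeq_eq_of_card_edgeFinset_eq H hH
  rw [← walkSeries_congr hG₀, ← walkSeries_congr hH₀]
  exact hx G₀ H₀ (by rwa [hG₀, hH₀])

end WalkOrder

section LexMax

variable {V : Type*} [Fintype V] {ℋ : Set (SimpleGraph V)} {H H' : SimpleGraph V}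

lemma EXiter_subset (ℓ : ℕ) : EXiter ℓ ℋ ⊆ ℋ := by
  induction ℓ with
  | zero => exact subset_rfl
  | succ ℓ ih => exact (Set.sep_subset _ _).trans ih

lemma totalWalks_eq_of_mem_EXiter {k ℓ : ℕ} (hH : H ∈ EXiter k ℋ) (hH' : H' ∈ EXiter k ℋ)
    (hℓ : ℓ < k) : totalWalks H (ℓ + 1) = totalWalks H' (ℓ + 1) := by
  induction k with
  | zero => omega
  | succ k ih =>
    rcases Nat.lt_succ_iff_lt_or_eq.mp hℓ with hlt | rfl
    · exact ih hH.1 hH'.1 hlt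
    · exact le_antisymm (hH'.2 H hH.1) (hH.2 H' hH'.1)

lemma mem_EXiter_of_totalWalks_eq {k : ℕ} (hH : H ∈ EXiter k ℋ) (hH' : H' ∈ ℋ)
    (heq : ∀ ℓ < k, totalWalks H (ℓ + 1) = totalWalks H' (ℓ + 1)) : H' ∈ EXiter k ℋ := by
  induction k with
  | zero => exact hH'
  | succ k ih =>
    exact ⟨ih hH.1 fun ℓ hℓ ↦ heq ℓ (hℓ.trans k.lt_succ_self), heq k k.lt_succ_self ▸ hH.2⟩

theorem mem_iInter_EXiter_iff :
    H ∈ ⋂ ℓ : ℕ, EXiter ℓ ℋ ↔ H ∈ ℋ ∧ ∀ H' ∈ ℋ, walkSeq H' ≤ walkSeq H := by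
  rw [Set.mem_iInter]
  constructor
  · refine fun hH ↦ ⟨hH 0, fun H' hH' ↦ le_of_not_gt fun ⟨k, heq, hlt⟩ ↦ ?_⟩
    exact ((hH (k + 1)).2 H' (mem_EXiter_of_totalWalks_eq (hH k) hH' heq)).not_gt hlt
  · rintro ⟨hH, hmax⟩ ℓ
    induction ℓ with
    | zero => exact hH
    | succ ℓ ih =>
      refine ⟨ih, fun H' hH' ↦ le_of_not_gt fun hlt ↦ (hmax H' (EXiter_subset ℓ hH')).not_gt ?_⟩
      exact ⟨ℓ, fun j hj ↦ totalWalks_eq_of_mem_EXiter ih hH' hj, hlt⟩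

end LexMax

section Turan

/-- The part `V_i` of the Turán graph `turanGraph n r`, as a set of vertices. -/
def turanPart (n r : ℕ) (i : Fin r) : Set (Fin n) :=
  {v | (v : ℕ) % r = i}

variable {n r t : ℕ} {i : Fin r} {G G' : SimpleGraph (Fin n)}

lemma div_le_ncard_turanPart (n : ℕ) (i : Fin r) : n / r ≤ (turanPart n r i).ncard := by
  have hlt (m : Fin (n / r)) : r * m + i < n :=
    calc r * m + i < r * (m + 1) := by rw [mul_add_one]; omega
      _ ≤ r * (n / r) := Nat.mul_le_mul_left r m.2
      _ ≤ n := Nat.mul_div_le n r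
  let f (m : Fin (n / r)) : turanPart n r i :=
    ⟨⟨r * m + i, hlt m⟩, by simp [turanPart, Nat.mod_eq_of_lt]⟩
  have hf : Function.Injective f := fun m m' (h : f m = f m') ↦ Fin.ext <| by
    simpa [f, (Fin.pos i).ne'] using congrArg (fun v ↦ (v.1 : ℕ)) h
  simpa [← Nat.card_coe_set_eq] using Nat.card_le_card_of_injective f hf

lemma turanPart_compl_nonempty (hr : 2 ≤ r) (hrn : r ≤ n) (i : Fin r) :
    (turanPart n r i)ᶜ.Nonempty := by
  by_cases hi : (i : ℕ) = 0
  · exact ⟨⟨1, by omega⟩, by simp [turanPart, hi, Nat.mod_eq_of_lt (show 1 < r by omega)]⟩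
  · exact ⟨⟨0, by omega⟩, by simpa [turanPart] using Ne.symm hi⟩

lemma isCompleteBetween_turanPart (hG : turanGraph n r ≤ G) :
    G.IsCompleteBetween (turanPart n r i) (turanPart n r i)ᶜ :=
  fun _ hu _ hv ↦ hG (turanGraph_adj.mpr fun h ↦ hv (h.symm.trans hu))

lemma walkSeq_induce_turanPart (hG : inPart n r i G) :
    walkSeq (G.induce (turanPart n r i)) = walkSeq (emb n r G) := by
  have hinduce : G.induce (turanPart n r i) = (emb n r G).induce (turanPart n r i) := by
    ext u v
    simp [emb, turanGraph_adj, u.2.trans v.2.symm]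
  rw [hinduce, walkSeq_induce_of_support_subset fun u ⟨v, huv⟩ ↦ hG u v huv]

lemma induce_compl_turanPart (hturan : turanGraph n r ≤ G) (hG : inPart n r i G) :
    G.induce (turanPart n r i)ᶜ = (turanGraph n r).induce (turanPart n r i)ᶜ := by
  ext u v
  refine ⟨fun huv ↦ ?_, fun huv ↦ hturan huv⟩
  by_contra hnot
  exact u.2 (hG u v ⟨huv, hnot⟩)

lemma turanPart_nonempty (hrn : r ≤ n) (i : Fin r) : (turanPart n r i).Nonempty :=
  ⟨⟨i, i.2.trans_le hrn⟩, Nat.mod_eq_of_lt i.2⟩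

lemma sqrt_div_le_spectralRad (hr : 2 ≤ r) (hrn : r ≤ n) (hG : turanGraph n r ≤ G) :
    √(n / r : ℕ) ≤ spectralRad G := by
  let i : Fin r := ⟨0, by omega⟩
  have hpart := turanPart_nonempty hrn i
  have hcompl := turanPart_compl_nonempty hr hrn i
  have hcomplete := isCompleteBetween_turanPart (i := i) hG
  have hρ := spectralRad_pos_of_isCompleteBetween isCompl_compl hpart hcompl hcomplete
  refine Real.sqrt_le_iff.mpr ⟨hρ.le, ?_⟩
  calc ((n / r : ℕ) : ℝ) ≤ (turanPart n r i).ncard := mod_cast div_le_ncard_turanPart n i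
    _ ≤ (turanPart n r i).ncard * (turanPart n r i)ᶜ.ncard :=
      le_mul_of_one_le_right (Nat.cast_nonneg _) (mod_cast hcompl.ncard_pos)
    _ ≤ spectralRad G ^ 2 :=
      ncard_mul_ncard_le_spectralRad_sq isCompl_compl hpart hcompl hcomplete

lemma exists_forall_le_spectralRad (hr : 2 ≤ r) (X : ℝ) :
    ∃ N, r ≤ N ∧ ∀ n, N ≤ n → ∀ G : SimpleGraph (Fin n), turanGraph n r ≤ G →
      X ≤ spectralRad G := by
  have hN : r ≤ r * (⌈X ^ 2⌉₊ + 1) := Nat.le_mul_of_pos_right r (Nat.succ_pos _)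
  refine ⟨r * (⌈X ^ 2⌉₊ + 1), hN, fun n hn G hG ↦ ?_⟩
  have hdiv : ⌈X ^ 2⌉₊ ≤ n / r := by
    rw [Nat.le_div_iff_mul_le (by omega), mul_comm]
    exact (Nat.mul_le_mul_left r (Nat.le_succ _)).trans hn
  exact (Real.le_sqrt_of_sq_le (Nat.ceil_le.mp hdiv)).trans
    (sqrt_div_le_spectralRad hr (hN.trans hn) hG)

lemma spectralRad_le_of_walkSeries_emb_le (hr : 2 ≤ r) (hrn : r ≤ n)
    (hG : G ∈ classSet n r (TuranFam n r t) i) (hG' : G' ∈ classSet n r (TuranFam n r t) i)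
    (hle : walkSeries (emb n r G) (spectralRad G) ≤ walkSeries (emb n r G') (spectralRad G)) :
    spectralRad G ≤ spectralRad G' := by
  rw [← walkSeries_congr (walkSeq_induce_turanPart hG.2),
    ← walkSeries_congr (walkSeq_induce_turanPart hG'.2)] at hle
  exact spectralRad_le_of_walkSeries_le isCompl_compl (turanPart_nonempty hrn i)
    (turanPart_compl_nonempty hr hrn i) (isCompleteBetween_turanPart hG.1.1)
    (isCompleteBetween_turanPart hG'.1.1) ((induce_compl_turanPart hG.1.1 hG.2).trans
      (induce_compl_turanPart hG'.1.1 hG'.2).symm) hle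

lemma spectralRad_lt_of_walkSeries_emb_lt (hr : 2 ≤ r) (hrn : r ≤ n)
    (hG : G ∈ classSet n r (TuranFam n r t) i) (hG' : G' ∈ classSet n r (TuranFam n r t) i)
    (hlt : walkSeries (emb n r G) (spectralRad G) < walkSeries (emb n r G') (spectralRad G)) :
    spectralRad G < spectralRad G' := by
  rw [← walkSeries_congr (walkSeq_induce_turanPart hG.2),
    ← walkSeries_congr (walkSeq_induce_turanPart hG'.2)] at hlt
  exact spectralRad_lt_of_walkSeries_lt isCompl_compl (turanPart_nonempty hrn i)
    (turanPart_compl_nonempty hr hrn i) (isCompleteBetween_turanPart hG.1.1)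
    (isCompleteBetween_turanPart hG'.1.1) ((induce_compl_turanPart hG.1.1 hG.2).trans
      (induce_compl_turanPart hG'.1.1 hG'.2).symm) hlt

theorem exists_forall_spectralRad_le_iff_walkSeq_le (t : ℕ) (hr : 2 ≤ r) :
    ∃ N, ∀ n, N ≤ n → ∀ i : Fin r, ∀ G ∈ classSet n r (TuranFam n r t) i,
      ∀ G' ∈ classSet n r (TuranFam n r t) i,
        (spectralRad G ≤ spectralRad G' ↔ walkSeq (emb n r G) ≤ walkSeq (emb n r G')) := by
  obtain ⟨X, hX⟩ := Filter.eventually_atTop.mp (eventually_forall_walkSeries_lt t)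
  obtain ⟨N, hrN, hN⟩ := exists_forall_le_spectralRad hr X
  refine ⟨N, fun n hn i ↦ ?_⟩
  have hlt : ∀ G ∈ classSet n r (TuranFam n r t) i, ∀ G' ∈ classSet n r (TuranFam n r t) i,
      walkSeq (emb n r G) < walkSeq (emb n r G') → spectralRad G < spectralRad G' :=
    fun G hG G' hG' h ↦ spectralRad_lt_of_walkSeries_emb_lt hr (hrN.trans hn) hG hG' <|
      hX _ (hN n hn G hG.1.1) _ _ hG.1.2.2 hG'.1.2.2 h
  refine fun G hG G' hG' ↦ ⟨fun hρ ↦ le_of_not_gt fun h ↦ hρ.not_gt (hlt G' hG' G hG h), fun h ↦ ?_⟩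
  rcases h.eq_or_lt with heq | h
  · exact spectralRad_le_of_walkSeries_emb_le hr (hrN.trans hn) hG hG' (walkSeries_congr heq _).le
  · exact (hlt G hG G' hG' h).le

end Turan

theorem stmt_13_general (t r : ℕ) (hr : 2 ≤ r) :
    ∃ N : ℕ, ∀ n : ℕ, N ≤ n → ∀ i : Fin r, ∀ 𝒜 ⊆ classSet n r (TuranFam n r t) i, ∀ G ∈ 𝒜,
      (G ∈ SPEXset 𝒜 ↔ emb n r G ∈ ⋂ ℓ : ℕ, EXiter ℓ (emb n r '' 𝒜)) := by
  obtain ⟨N, hN⟩ := exists_forall_spectralRad_le_iff_walkSeq_le t hr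
  refine ⟨N, fun n hn i 𝒜 h𝒜 G hG ↦ ?_⟩
  rw [mem_iInter_EXiter_iff, Set.forall_mem_image]
  exact and_congr (iff_of_true hG (Set.mem_image_of_mem _ hG)) <|
    forall₂_congr fun G' hG' ↦ hN n hn i G' (h𝒜 hG') G (h𝒜 hG)

/-- (Theorem 1.4 (ii).) For `t ≥ 1`, `r ≥ 2` and sufficiently large `n`:
if `𝒢` is a normal subset of `𝒯_{n,r,t}` with
`{G ∈ 𝒢 : H^G ∈ EX²(ℋ^𝒢)} ⊆ ∪_i 𝒢_i`, then for any `i` and any `G ∈ 𝒢_i`,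
`G ∈ SPEX(𝒢_i)` iff `H^G ∈ EX^∞(ℋ^{𝒢_i})`. -/
theorem stmt_13 (t r : ℕ) (ht : 1 ≤ t) (hr : 2 ≤ r) :
    ∃ N : ℕ, ∀ n : ℕ, N ≤ n →
      ∀ 𝒢 : Set (SimpleGraph (Fin n)), 𝒢 ⊆ TuranFam n r t →
        IsNormal n r 𝒢 →
        {G ∈ 𝒢 | emb n r G ∈ EXiter 2 (emb n r '' 𝒢)} ⊆ ⋃ i : Fin r, classSet n r 𝒢 i →
        ∀ i : Fin r, ∀ G ∈ classSet n r 𝒢 i,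
          (G ∈ SPEXset (classSet n r 𝒢 i) ↔
            emb n r G ∈ ⋂ ℓ : ℕ, EXiter ℓ (emb n r '' classSet n r 𝒢 i)) := by
  obtain ⟨N, hN⟩ := stmt_13_general t r hr
  exact ⟨N, fun n hn 𝒢 h𝒢 _ _ i ↦ hN n hn i _ fun _ hG ↦ ⟨h𝒢 hG.1, hG.2⟩⟩
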